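/- Let i and i′ be two reduced words in Σ_{n+1} with |GP(i)| ≠ |GP(i′)|. Then for every regular dominant integral weight λ, the string polytopes Δ_i(λ) and Δ_{i′}(λ) have different numbers of facets; in particular they are not combinatorially equivalent. -/

import Mathlib

open scoped Classical

noncomputable section

namespace StringPolytope

/-! ### Words, reduced words, two-moves -/

/-- the simple transposition `s_a = (a, a+1)` acting on `ℕ` (wires are `1, …, n+1`). -/
def sTrans (a : ℕ) : Equiv.Perm ℕ := Equiv.swap a (a + 1)

/-- product `s_{i₁} ⋯ s_{i_N}` of the simple transpositions of a word. -/
def wordProd (w : List ℕ) : Equiv.Perm ℕ := (w.map sTrans).prod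

/-- the longest element `w₀` of the symmetric group on `{1, …, n+1}`,
sending `k ↦ n + 2 - k` there and fixing everything else. -/
def longestPerm (n : ℕ) : Equiv.Perm ℕ :=
  Function.Involutive.toPerm
    (fun k => if 1 ≤ k ∧ k ≤ n + 1 then n + 2 - k else k)
    (by intro k; dsimp only; split_ifs <;> omega)

/-- `w ∈ Σ_{n+1}`: a reduced word of the longest element of `S_{n+1}`,
i.e. a word over `[n] = {1,…,n}` of length `N = n(n+1)/2` whose product is `w₀`. -/
def IsReduced (n : ℕ) (w : List ℕ) : Prop :=
  w.length = n * (n + 1) / 2 ∧ (∀ a ∈ w, 1 ≤ a ∧ a ≤ n) ∧ wordProd w = longestPerm n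

/-- a single 2-move: exchange two adjacent letters `(a, b)` with `|a - b| > 1`. -/
def TwoMoveStep (w w' : List ℕ) : Prop :=
  ∃ u v a b, (a + 1 < b ∨ b + 1 < a) ∧ w = u ++ a :: b :: v ∧ w' = u ++ b :: a :: v

/-- 2-move equivalence of words. -/
def TwoMoveEquiv : List ℕ → List ℕ → Prop := Relation.ReflTransGen TwoMoveStep

/-- `A_n = (1, 2, …, n)`. -/
def ascWord (n : ℕ) : List ℕ := (List.range n).map (· + 1)

/-- `D_n = (n, n-1, …, 1)`. -/
def descWord (n : ℕ) : List ℕ := (ascWord n).reverse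

/-! ### The wiring diagram -/

/-- the letter `i_j` of `w` (1-based index `j`); the node `t_j` lies in column `i_j`. -/
def letterAt (w : List ℕ) (j : ℕ) : ℕ := w.getD (j - 1) 0

/-- `1 ≤ j ≤ N`: `t_j` is an actual node of the diagram. -/
def ValidNode (w : List ℕ) (j : ℕ) : Prop := 1 ≤ j ∧ j ≤ w.length

/-- the column-to-wire assignment just above node `t_j`
(at the top of the diagram, wire `k` is in column `k`). -/
def stateAbove (w : List ℕ) (j : ℕ) : Equiv.Perm ℕ := wordProd (w.take (j - 1))

/-- the column-to-wire assignment just below node `t_j`. -/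
def stateBelow (w : List ℕ) (j : ℕ) : Equiv.Perm ℕ := wordProd (w.take j)

/-- one of the two wires crossing at node `t_j` (the one leaving upward-left). -/
def wireX (w : List ℕ) (j : ℕ) : ℕ := stateAbove w j (letterAt w j)

/-- the other wire crossing at node `t_j` (the one leaving upward-right). -/
def wireY (w : List ℕ) (j : ℕ) : ℕ := stateAbove w j (letterAt w j + 1)

/-- the node `t_j` lies on the wire `ℓ_r`. -/
def NodeOnWire (w : List ℕ) (j r : ℕ) : Prop := wireX w j = r ∨ wireY w j = r

/-- given one wire `r` at node `t_j`, the other wire crossing there. -/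
def otherWire (w : List ℕ) (j r : ℕ) : ℕ := if wireX w j = r then wireY w j else wireX w j

/-- the column of wire `ℓ_r` at the height of node `t_j`. -/
def wireCol (w : List ℕ) (j r : ℕ) : ℕ := (stateBelow w j).symm r

/-- node `t_j` lies strictly below the wire `ℓ_{n+1}`
(which runs from the bottom-left corner to the top-right corner). -/
def BelowWireLast (n : ℕ) (w : List ℕ) (j : ℕ) : Prop :=
  wireCol w j (n + 1) < letterAt w j

/-- node `t_j` lies strictly above the wire `ℓ_{n+1}`. -/
def AboveWireLast (n : ℕ) (w : List ℕ) (j : ℕ) : Prop :=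
  letterAt w j + 1 < wireCol w j (n + 1)

/-- node `t_j` lies strictly below the wire `ℓ_1`
(which runs from the bottom-right corner to the top-left corner). -/
def BelowWireOne (w : List ℕ) (j : ℕ) : Prop :=
  letterAt w j + 1 < wireCol w j 1

/-- node `t_j` lies strictly above the wire `ℓ_1`. -/
def AboveWireOne (w : List ℕ) (j : ℕ) : Prop :=
  wireCol w j 1 < letterAt w j

/-! ### Rigorous (Gleizer–Postnikov) paths

A path in `G(i, k)` is encoded by `k` together with the list of its switching
nodes, in order of travel.  Wires `ℓ_1, …, ℓ_k` are oriented upward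
(decreasing node index) and the remaining wires downward. -/

/-- the (1-based indices of the) nodes lying on wire `ℓ_r`, in order of increasing index. -/
def nodesOn (w : List ℕ) (r : ℕ) : List ℕ :=
  ((List.range w.length).map (· + 1)).filter (fun j => decide (NodeOnWire w j r))

/-- nodes on wire `ℓ_r` strictly between the nodes `t_a` and `t_b`. -/
def segList (w : List ℕ) (r a b : ℕ) : List ℕ :=
  (nodesOn w r).filter (fun j => decide (min a b < j ∧ j < max a b))

/-- nodes on wire `ℓ_r` strictly below the node `t_a`. -/
def tailList (w : List ℕ) (r a : ℕ) : List ℕ :=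
  (nodesOn w r).filter (fun j => decide (a < j))

/-- a forbidden fragment of `G(i, k)`: the path passes straight through node `t_j`
travelling along the wire `ℓ_r`, where the other wire `ℓ_b` crossing there has the same
orientation as `ℓ_r` and (`r < b` if both upward, `r > b` if both downward). -/
def Forbidden (w : List ℕ) (k j r : ℕ) : Prop :=
  (r ≤ k ∧ otherWire w j r ≤ k ∧ r < otherWire w j r) ∨
  (k < r ∧ k < otherWire w j r ∧ otherWire w j r < r)

/-- travelling in `G(i,k)`: currently on wire `ℓ_r` at node `t_a` (just switched there),
with future switching nodes `ms`; the travel is legal and ends at `L_{k+1}`. -/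
def TravelOK (w : List ℕ) (k : ℕ) : ℕ → ℕ → List ℕ → Prop
  | r, a, [] => r = k + 1 ∧ ∀ j ∈ tailList w r a, ¬ Forbidden w k j r
  | r, a, m :: ms =>
      ValidNode w m ∧ NodeOnWire w m r ∧
      (if r ≤ k then m < a else a < m) ∧
      (∀ j ∈ segList w r a m, ¬ Forbidden w k j r) ∧
      TravelOK w k (otherWire w m r) m ms

/-- all nodes visited after the switch at node `t_a` onto wire `ℓ_r`. -/
def visitTail (w : List ℕ) : ℕ → ℕ → List ℕ → List ℕ
  | r, a, [] => tailList w r a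
  | r, a, m :: ms => segList w r a m ++ m :: visitTail w (otherWire w m r) m ms

/-- the list of all nodes visited by the path (switching nodes and straight passes). -/
def visitList (w : List ℕ) (k : ℕ) : List ℕ → List ℕ
  | [] => []
  | m :: ms => tailList w k m ++ m :: visitTail w (otherWire w m k) m ms

/-- `(k, ms)` encodes a rigorous (Gleizer–Postnikov) path in `G(i, k)`:
it starts at `L_k` going up the wire `ℓ_k`, switches wires exactly at the nodes
listed in `ms`, respects the orientation, ends at `L_{k+1}`, contains no forbidden
fragment and passes through each node at most once. -/
def IsGPPath (n : ℕ) (w : List ℕ) (k : ℕ) (ms : List ℕ) : Prop :=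
  1 ≤ k ∧ k ≤ n ∧
  (match ms with
   | [] => False
   | m :: rest =>
       ValidNode w m ∧ NodeOnWire w m k ∧
       (∀ j ∈ tailList w k m, ¬ Forbidden w k j k) ∧
       TravelOK w k (otherWire w m k) m rest) ∧
  (visitList w k ms).Nodup

/-- the set `GP(i)` of all rigorous paths of `G(i)`. -/
def GP (n : ℕ) (w : List ℕ) : Set (ℕ × List ℕ) := {p | IsGPPath n w p.1 p.2}

/-- `|GP(i)|`, the number of rigorous paths. -/
def numGP (n : ℕ) (w : List ℕ) : ℕ := (GP n w).ncard

/-- the successive switches of a path: `(node, from-wire, to-wire)`. -/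
def pathSwitches (w : List ℕ) : ℕ → List ℕ → List (ℕ × ℕ × ℕ)
  | _, [] => []
  | r, m :: ms => (m, r, otherWire w m r) :: pathSwitches w (otherWire w m r) ms

/-- the wire-expression of a path: the successive wires travelled. -/
def wireSeq (w : List ℕ) : ℕ → List ℕ → List ℕ
  | r, [] => [r]
  | r, m :: ms => r :: wireSeq w (otherWire w m r) ms

/-- the peaks of a path: switching nodes where the path switches from an
upward wire to a downward wire. -/
def peaks (w : List ℕ) (k : ℕ) (ms : List ℕ) : List ℕ :=
  ((pathSwitches w k ms).filter (fun e => decide (e.2.1 ≤ k ∧ k < e.2.2))).map (·.1)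

/-! ### String cone, `λ`-cone, string polytope -/

/-- `N = n(n+1)/2`, the number of nodes. -/
abbrev Dim (n : ℕ) : ℕ := n * (n + 1) / 2

/-- the coefficient `a_j` of `t_j` in the string inequality of the path `(k, ms)`:
`+1` if the path switches at `t_j` from `ℓ_r` to `ℓ_s` with `r < s`,
`-1` if it switches with `r > s`, and `0` otherwise. -/
def coeff (w : List ℕ) (k : ℕ) (ms : List ℕ) (j : ℕ) : ℝ :=
  ((pathSwitches w k ms).map (fun e =>
    if e.1 = j then (if e.2.1 < e.2.2 then (1 : ℝ) else -1) else 0)).sum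

/-- the (primitive inward normal) coefficient vector of the string inequality of a path. -/
def normalVec (n : ℕ) (w : List ℕ) (p : ℕ × List ℕ) : Fin (Dim n) → ℝ :=
  fun j => coeff w p.1 p.2 ((j : ℕ) + 1)

/-- the left-hand side `∑ a_j t_j` of the string inequality of the path `p`. -/
def stringIneq (n : ℕ) (w : List ℕ) (p : ℕ × List ℕ) (t : Fin (Dim n) → ℝ) : ℝ :=
  ∑ j : Fin (Dim n), normalVec n w p j * t j

/-- the string cone `C_i ⊆ ℝ^N`. -/
def stringCone (n : ℕ) (w : List ℕ) : Set (Fin (Dim n) → ℝ) :=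
  {t | ∀ p ∈ GP n w, 0 ≤ stringIneq n w p t}

/-- the polyhedron cut out by all string inequalities except the one of `p₀`. -/
def stringConeExcept (n : ℕ) (w : List ℕ) (p₀ : ℕ × List ℕ) : Set (Fin (Dim n) → ℝ) :=
  {t | ∀ p ∈ GP n w, p ≠ p₀ → 0 ≤ stringIneq n w p t}

/-- the coefficient `a_k` in the `λ`-inequality of node `t_j`:
`1` if `t_k` is one column left or right of `t_j`, `-2` if in the same column. -/
def lamCoeff (w : List ℕ) (j k : ℕ) : ℝ :=
  if letterAt w k = letterAt w j then -2
  else if letterAt w k = letterAt w j + 1 ∨ letterAt w k + 1 = letterAt w j then 1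
  else 0

/-- the `λ`-inequality of node `t_{j+1}`:
`t_j ≤ λ_{i_j} + ∑_{k > j} a_k t_k`. -/
def LamIneq (n : ℕ) (w : List ℕ) (lam : ℕ → ℤ) (j : Fin (Dim n)) (t : Fin (Dim n) → ℝ) : Prop :=
  t j ≤ (lam (letterAt w ((j : ℕ) + 1)) : ℝ) +
    ∑ k : Fin (Dim n),
      (if (j : ℕ) < (k : ℕ) then lamCoeff w ((j : ℕ) + 1) ((k : ℕ) + 1) else 0) * t k

/-- the `λ`-cone `C_i^λ ⊆ ℝ^N`. -/
def lamCone (n : ℕ) (w : List ℕ) (lam : ℕ → ℤ) : Set (Fin (Dim n) → ℝ) :=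
  {t | ∀ j, LamIneq n w lam j t}

/-- the polyhedron cut out by all `λ`-inequalities except the one of `j₀`. -/
def lamConeExcept (n : ℕ) (w : List ℕ) (lam : ℕ → ℤ) (j₀ : Fin (Dim n)) :
    Set (Fin (Dim n) → ℝ) :=
  {t | ∀ j, j ≠ j₀ → LamIneq n w lam j t}

/-- the string polytope `Δ_i(λ) = C_i ∩ C_i^λ`. -/
def stringPolytope (n : ℕ) (w : List ℕ) (lam : ℕ → ℤ) : Set (Fin (Dim n) → ℝ) :=
  stringCone n w ∩ lamCone n w lam

/-- `λ = λ_1 ϖ_1 + ⋯ + λ_n ϖ_n` is a dominant integral weight: all `λ_j ≥ 0`. -/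
def Dominant (n : ℕ) (lam : ℕ → ℤ) : Prop := ∀ j, 1 ≤ j → j ≤ n → 0 ≤ lam j

/-- `λ` is a regular dominant integral weight: all `λ_j > 0`. -/
def RegularDominant (n : ℕ) (lam : ℕ → ℤ) : Prop := ∀ j, 1 ≤ j → j ≤ n → 0 < lam j

/-! ### Unimodular equivalence, Gelfand–Cetlin polytope, facets -/

/-- `P` and `Q` are unimodularly equivalent: `Q = M(P) + v` with `M ∈ GL(m, ℤ)`, `v ∈ ℤ^m`. -/
def UnimodEquiv {m : ℕ} (P Q : Set (Fin m → ℝ)) : Prop :=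
  ∃ (M : Matrix (Fin m) (Fin m) ℤ) (v : Fin m → ℤ), IsUnit M.det ∧
    Q = (fun x i => (∑ j, (M i j : ℝ) * x j) + (v i : ℝ)) '' P

/-- the entry `x_{k,j}` (`1 ≤ j ≤ k ≤ n+1`) of a Gelfand–Cetlin pattern, where the
top row is `x_{n+1,j} = λ_j + ⋯ + λ_n` and `x_{n+1,n+1} = 0`; the pair `(k, j)` is
encoded as the coordinate `k(k-1)/2 + (j-1)` of `ℝ^N`. -/
def gcX (n : ℕ) (lam : ℕ → ℤ) (x : Fin (Dim n) → ℝ) (k j : ℕ) : ℝ :=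
  if k = n + 1 then (if j ≤ n then ∑ t ∈ Finset.Icc j n, (lam t : ℝ) else 0)
  else if h : k * (k - 1) / 2 + (j - 1) < Dim n then x ⟨k * (k - 1) / 2 + (j - 1), h⟩ else 0

/-- the Gelfand–Cetlin polytope `GC(λ) ⊆ ℝ^N`. -/
def GCPolytope (n : ℕ) (lam : ℕ → ℤ) : Set (Fin (Dim n) → ℝ) :=
  {x | ∀ k j, 1 ≤ k → k ≤ n → 1 ≤ j → j ≤ k →
      gcX n lam x k j ≤ gcX n lam x (k + 1) j ∧
      gcX n lam x (k + 1) (j + 1) ≤ gcX n lam x k j}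

/-- a face of a convex set: a convex extreme subset. -/
def IsFaceSet {m : ℕ} (S F : Set (Fin m → ℝ)) : Prop := IsExtreme ℝ S F ∧ Convex ℝ F

/-- a facet: a maximal proper face. -/
def IsFacet {m : ℕ} (S F : Set (Fin m → ℝ)) : Prop :=
  IsFaceSet S F ∧ F ≠ S ∧ ∀ G, IsFaceSet S G → G ≠ S → F ⊆ G → F = G

/-- the number of facets. -/
def numFacets {m : ℕ} (S : Set (Fin m → ℝ)) : ℕ := {F | IsFacet S F}.ncard

/-- combinatorial equivalence: an inclusion-preserving bijection between face lattices. -/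
def CombEquiv {m : ℕ} (S T : Set (Fin m → ℝ)) : Prop :=
  ∃ e : {F // IsFaceSet S F} ≃ {F // IsFaceSet T F},
    ∀ F G : {F // IsFaceSet S F}, F.1 ⊆ G.1 ↔ (e F).1 ⊆ (e G).1

/-! ### Indices, contractions and extensions -/

/-- the `D`-index `ind_D(i) = |i_D^+|` for a decomposition `i ∼ i_D^- D_n i_D^+`
(independent of the decomposition). -/
def indD (n : ℕ) (w : List ℕ) : ℕ :=
  sInf {s | ∃ u v : List ℕ, v.length = s ∧ TwoMoveEquiv w (u ++ descWord n ++ v)}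

/-- the `A`-index `ind_A(i) = |i_A^+|` for a decomposition `i ∼ i_A^- A_n i_A^+`. -/
def indA (n : ℕ) (w : List ℕ) : ℕ :=
  sInf {s | ∃ u v : List ℕ, v.length = s ∧ TwoMoveEquiv w (u ++ ascWord n ++ v)}

/-- `w'` is a `D`-contraction `C_D(w) = i_D^- (i_D^+ - 1)` of `w ∈ Σ_{n+1}`. -/
def IsContractionD (n : ℕ) (w w' : List ℕ) : Prop :=
  ∃ u v : List ℕ, TwoMoveEquiv w (u ++ descWord n ++ v) ∧ w' = u ++ v.map (· - 1)

/-- `w'` is an `A`-contraction `C_A(w) = (i_A^- - 1) i_A^+` of `w ∈ Σ_{n+1}`. -/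
def IsContractionA (n : ℕ) (w w' : List ℕ) : Prop :=
  ∃ u v : List ℕ, TwoMoveEquiv w (u ++ ascWord n ++ v) ∧ w' = u.map (· - 1) ++ v

/-- the `D`-extension `E_D(s) : Σ_{n+1} → Σ_{n+2}`,
`i = i^-(s) i^+(s) ↦ i^-(s) D_{n+1} (i^+(s) + 1)` where `|i^+(s)| = s`. -/
def extD (n : ℕ) (s : ℕ) (w : List ℕ) : List ℕ :=
  w.take (w.length - s) ++ descWord (n + 1) ++ (w.drop (w.length - s)).map (· + 1)

/-- the `A`-extension `E_A(s) : Σ_{n+1} → Σ_{n+2}`,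
`i = i^-(s) i^+(s) ↦ (i^-(s) + 1) A_{n+1} i^+(s)`. -/
def extA (n : ℕ) (s : ℕ) (w : List ℕ) : List ℕ :=
  (w.take (w.length - s)).map (· + 1) ++ ascWord (n + 1) ++ w.drop (w.length - s)

/-- there exists `(σ_1, …, σ_n) ∈ {A, D}^n` (here `true = D`, `false = A`) such that
`ind_{σ_k}(C_{σ_{k+1}} ∘ ⋯ ∘ C_{σ_n}(i)) = 0` for all `k = n, …, 1`. -/
def SimplicialWord (n : ℕ) (w : List ℕ) : Prop :=
  ∃ (σ : ℕ → Bool) (c : ℕ → List ℕ), c n = w ∧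
    ∀ k, 1 ≤ k → k ≤ n →
      (if σ k then IsContractionD k (c k) (c (k - 1)) ∧ indD k (c k) = 0
       else IsContractionA k (c k) (c (k - 1)) ∧ indA k (c k) = 0)


/-- the `D`-coindex `coind_D(i) = |i_D^-|`. -/
def coindD (n : ℕ) (w : List ℕ) : ℕ :=
  sInf {s | ∃ u v : List ℕ, u.length = s ∧ TwoMoveEquiv w (u ++ descWord n ++ v)}

/-- the `A`-coindex `coind_A(i) = |i_A^-|`. -/
def coindA (n : ℕ) (w : List ℕ) : ℕ :=
  sInf {s | ∃ u v : List ℕ, u.length = s ∧ TwoMoveEquiv w (u ++ ascWord n ++ v)}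

/-- the `a`-th (0-based) coordinate of a point of `ℝ^N`. -/
def entry (n : ℕ) (t : Fin (Dim n) → ℝ) (a : ℕ) : ℝ :=
  if h : a < Dim n then t ⟨a, h⟩ else 0

/-- the product of cones
`t_1 ≥ 0`, `t_2 ≥ t_3 ≥ 0`, …, `t_{N-n+1} ≥ ⋯ ≥ t_N ≥ 0` (in `ℝ^N`, 1-based:
for `k = 1, …, n` the chain `t_{k(k-1)/2+1} ≥ ⋯ ≥ t_{k(k-1)/2+k} ≥ 0`). -/
def chainCone (n : ℕ) : Set (Fin (Dim n) → ℝ) :=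
  {t | ∀ k j, 1 ≤ k → k ≤ n → 1 ≤ j → j ≤ k →
    (if j = k then 0 else entry n t (k * (k - 1) / 2 + j)) ≤
      entry n t (k * (k - 1) / 2 + (j - 1))}

/-! ### Generic polyhedral facts -/

lemma exists_small {ι : Type*} [Finite ι] (f h : ι → ℝ) (hf : ∀ a, 0 < f a) :
    ∃ ε : ℝ, 0 < ε ∧ ∀ a, ε * h a < f a := by
  have h1 : ∀ a, ∀ᶠ ε in nhdsWithin (0 : ℝ) (Set.Ioi 0), ε * h a < f a := by
    intro a
    have : Filter.Tendsto (fun ε : ℝ => ε * h a) (nhdsWithin 0 (Set.Ioi 0)) (nhds (0 * h a)) :=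
      ((continuous_id.mul continuous_const).tendsto 0).mono_left nhdsWithin_le_nhds
    rw [zero_mul] at this
    exact this.eventually_lt_const (hf a)
  have h2 := (Filter.eventually_all.2 h1).and self_mem_nhdsWithin
  obtain ⟨ε, he, he'⟩ := h2.exists
  exact ⟨ε, he', he⟩

/-- `g` is affine. -/
def IsAff {m : ℕ} (g : (Fin m → ℝ) → ℝ) : Prop :=
  ∀ x y : Fin m → ℝ, ∀ s t : ℝ, s + t = 1 → g (s • x + t • y) = s * g x + t * g y

section Facets

variable {m : ℕ} {ι : Type*} [Finite ι] (g : ι → (Fin m → ℝ) → ℝ)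

/-- the polyhedron -/
def Poly {m : ℕ} {ι : Type*} (g : ι → (Fin m → ℝ) → ℝ) : Set (Fin m → ℝ) := {t | ∀ a, 0 ≤ g a t}

/-- the candidate facet -/
def PolyF {m : ℕ} {ι : Type*} (g : ι → (Fin m → ℝ) → ℝ) (a : ι) : Set (Fin m → ℝ) :=
  {t | t ∈ Poly g ∧ g a t = 0}

lemma poly_convex {m : ℕ} {ι : Type*} (g : ι → (Fin m → ℝ) → ℝ) (hg : ∀ a, IsAff (g a)) :
    Convex ℝ (Poly g) := by
  intro x hx y hy s t hs ht hst a
  rw [hg a x y s t hst]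
  have := hx a
  have := hy a
  positivity

lemma polyF_face {m : ℕ} {ι : Type*} (g : ι → (Fin m → ℝ) → ℝ) (hg : ∀ a, IsAff (g a)) (a : ι) :
    IsFaceSet (Poly g) (PolyF g a) := by
  refine ⟨⟨fun x hx => hx.1, ?_⟩, ?_⟩
  · rintro x hx y hy z hz ⟨s, t, hs, ht, hst, rfl⟩
    refine ⟨hx, ?_⟩
    have h := hz.2
    rw [hg a x y s t hst] at h
    have h1 := hx a
    have h2 := hy a
    have h3 : 0 ≤ t * g a y := by positivity
    have h4 : s * g a x ≤ 0 := by linarith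
    nlinarith
  · intro x hx y hy s t hs ht hst
    refine ⟨poly_convex g hg hx.1 hy.1 hs ht hst, ?_⟩
    rw [hg a x y s t hst, hx.2, hy.2]; simp

lemma face_sub (hg : ∀ a, IsAff (g a)) [Nonempty ι] (G : Set (Fin m → ℝ))
    (hG : IsFaceSet (Poly g) G) (hne : G ≠ Poly g) : ∃ a, G ⊆ PolyF g a := by
  classical
  cases nonempty_fintype ι
  by_contra hcon
  push Not at hcon
  have hx : ∀ a, ∃ x ∈ G, 0 < g a x := by
    intro a
    obtain ⟨x, hxG, hx⟩ := Set.not_subset.1 (hcon a)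
    refine ⟨x, hxG, lt_of_le_of_ne (hG.1.1 hxG a) ?_⟩
    intro h
    exact hx ⟨hG.1.1 hxG, h.symm⟩
  have key : ∀ A : Finset ι, ∃ x ∈ G, ∀ a ∈ A, 0 < g a x := by
    intro A
    induction A using Finset.induction_on with
    | empty =>
      obtain ⟨x, hx, _⟩ := hx (Classical.arbitrary ι)
      exact ⟨x, hx, by simp⟩
    | insert a A _ ih =>
      obtain ⟨x, hxG, hxA⟩ := ih
      obtain ⟨y, hyG, hy⟩ := hx a
      have h12 : (1/2 : ℝ) + 1/2 = 1 := by norm_num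
      refine ⟨(1/2 : ℝ) • x + (1/2 : ℝ) • y,
        hG.2 hxG hyG (by norm_num) (by norm_num) h12, ?_⟩
      intro b hb
      rw [hg b x y _ _ h12]
      have hx0 := hG.1.1 hxG b
      have hy0 := hG.1.1 hyG b
      rcases Finset.mem_insert.1 hb with rfl | hb
      · linarith
      · have := hxA b hb
        linarith
  obtain ⟨x, hxG, hx⟩ := key Finset.univ
  apply hne
  refine Set.Subset.antisymm hG.1.1 ?_
  intro s hs
  obtain ⟨ε, he, hε⟩ := exists_small (fun a => g a x) (fun a => g a s) (fun a => hx a (Finset.mem_univ a))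
  have hy : (1 + ε) • x + (-ε) • s ∈ Poly g := by
    intro a
    rw [hg a x s _ _ (by ring)]
    have := hε a
    have := hx a (Finset.mem_univ a)
    nlinarith
  refine hG.1.2 hs hy hxG ⟨ε / (1 + ε), 1 / (1 + ε), by positivity, by positivity, ?_, ?_⟩
  · field_simp
    ring
  · ext i
    simp only [Pi.add_apply, Pi.smul_apply, smul_eq_mul]
    field_simp
    ring

lemma numFacets_poly (hg : ∀ a, IsAff (g a)) [Nonempty ι]
    (hinterior : ∃ x, ∀ a, 0 < g a x)
    (hpt : ∀ a, ∃ x, g a x = 0 ∧ ∀ b, b ≠ a → 0 < g b x) :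
    numFacets (Poly g) = Nat.card ι := by
  obtain ⟨x0, hx0⟩ := hinterior
  choose p hp0 hp using hpt
  have hpS : ∀ a, p a ∈ Poly g := by
    intro a b
    by_cases h : b = a
    · subst h; exact (hp0 b).ge
    · exact (hp a b h).le
  have hpF : ∀ a b, p a ∈ PolyF g b → b = a := by
    intro a b h
    by_contra hb
    have := hp a b hb
    rw [h.2] at this
    exact lt_irrefl _ this
  have hproper : ∀ a, PolyF g a ≠ Poly g := by
    intro a h
    have : x0 ∈ PolyF g a := by rw [h]; exact fun b => (hx0 b).le
    exact (hx0 a).ne' this.2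
  have hset : {F | IsFacet (Poly g) F} = Set.range (PolyF g) := by
    ext F
    constructor
    · rintro ⟨hF, hne, hmax⟩
      obtain ⟨a, ha⟩ := face_sub g hg F hF hne
      exact ⟨a, (hmax _ (polyF_face g hg a) (hproper a) ha).symm⟩
    · rintro ⟨a, rfl⟩
      refine ⟨polyF_face g hg a, hproper a, ?_⟩
      intro G hG hne hsub
      obtain ⟨b, hb⟩ := face_sub g hg G hG hne
      have := hpF a b (hb (hsub ⟨hpS a, hp0 a⟩))
      subst this
      exact Set.Subset.antisymm hsub hb
  have hinj : Function.Injective (PolyF g) := by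
    intro a b h
    have : p a ∈ PolyF g b := by rw [← h]; exact ⟨hpS a, hp0 a⟩
    exact (hpF a b this).symm
  unfold numFacets
  rw [hset, ← Set.image_univ, Set.ncard_image_of_injective _ hinj, Set.ncard_univ]

end Facets

lemma combEquiv_numFacets {m : ℕ} {S T : Set (Fin m → ℝ)} (hS : Convex ℝ S) (hT : Convex ℝ T)
    (h : CombEquiv S T) : numFacets S = numFacets T := by
  obtain ⟨e, he⟩ := h
  have fS : IsFaceSet S S := ⟨IsExtreme.refl ℝ S, hS⟩
  have fT : IsFaceSet T T := ⟨IsExtreme.refl ℝ T, hT⟩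
  have heS : e ⟨S, fS⟩ = ⟨T, fT⟩ := by
    apply Subtype.ext
    apply Set.Subset.antisymm (e ⟨S, fS⟩).2.1.1
    have h1 : (e.symm ⟨T, fT⟩).1 ⊆ S := (e.symm ⟨T, fT⟩).2.1.1
    have h2 := (he (e.symm ⟨T, fT⟩) ⟨S, fS⟩).1 h1
    simpa using h2
  have hfac : ∀ F : {F // IsFaceSet S F}, IsFacet S F.1 ↔ IsFacet T (e F).1 := by
    intro F
    constructor
    · rintro ⟨_, hne, hmax⟩
      refine ⟨(e F).2, ?_, ?_⟩
      · intro hh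
        have : e F = e ⟨S, fS⟩ := by rw [heS]; exact Subtype.ext hh
        exact hne (congrArg Subtype.val (e.injective this))
      · intro G hG hGne hsub
        have h1 : F.1 ⊆ (e.symm ⟨G, hG⟩).1 := by
          rw [he]; simpa using hsub
        have h2 : (e.symm ⟨G, hG⟩).1 ≠ S := by
          intro hh
          have h3 : e.symm ⟨G, hG⟩ = ⟨S, fS⟩ := Subtype.ext hh
          rw [Equiv.symm_apply_eq, heS] at h3
          exact hGne (congrArg Subtype.val h3)
        have h4 : F = e.symm ⟨G, hG⟩ := Subtype.ext (hmax _ (e.symm ⟨G, hG⟩).2 h2 h1)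
        rw [h4]; simp
    · rintro ⟨_, hne, hmax⟩
      refine ⟨F.2, ?_, ?_⟩
      · intro hh
        have : F = ⟨S, fS⟩ := Subtype.ext hh
        apply hne
        rw [this, heS]
      · intro G hG hGne hsub
        have h1 := (he F ⟨G, hG⟩).1 hsub
        have h2 : (e ⟨G, hG⟩).1 ≠ T := by
          intro hh
          have h3 : e ⟨G, hG⟩ = e ⟨S, fS⟩ := by rw [heS]; exact Subtype.ext hh
          exact hGne (congrArg Subtype.val (e.injective h3))
        have h4 : e F = e ⟨G, hG⟩ := Subtype.ext (hmax _ (e ⟨G, hG⟩).2 h2 h1)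
        exact congrArg Subtype.val (e.injective h4)
  unfold numFacets
  refine Set.ncard_congr (fun F hF => (e ⟨F, hF.1⟩).1) ?_ ?_ ?_
  · intro F hF
    exact (hfac ⟨F, hF.1⟩).1 hF
  · intro F G hF hG hh
    exact congrArg Subtype.val (e.injective (Subtype.ext hh))
  · intro G hG
    refine ⟨(e.symm ⟨G, hG.1⟩).1, ?_, ?_⟩
    · refine (hfac _).2 ?_
      simpa using hG
    · simp

/-! ### Extremality of the path vectors -/

/-- the sign of a switch. -/
def sg (r s : ℕ) : ℝ := if r < s then 1 else -1

lemma sg_ne (r s : ℕ) : sg r s ≠ 0 := by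
  unfold sg; split_ifs <;> norm_num

lemma coeff_nil (w : List ℕ) (r j : ℕ) : coeff w r [] j = 0 := by
  simp [coeff, pathSwitches]

lemma coeff_cons (w : List ℕ) (r m : ℕ) (ms : List ℕ) (j : ℕ) :
    coeff w r (m :: ms) j =
      (if m = j then sg r (otherWire w m r) else 0) + coeff w (otherWire w m r) ms j := by
  simp [coeff, pathSwitches, sg]

lemma coeff_not_mem (w : List ℕ) (j : ℕ) (ms : List ℕ) :
    ∀ r, j ∉ ms → coeff w r ms j = 0 := by
  induction ms with
  | nil => intro r _; exact coeff_nil w r j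
  | cons m ms ih =>
    intro r h
    rw [List.mem_cons, not_or] at h
    rw [coeff_cons, ih _ h.2, if_neg (fun e => h.1 e.symm), add_zero]

lemma sublist_visitTail (w : List ℕ) (ms : List ℕ) :
    ∀ r a, ms.Sublist (visitTail w r a ms) := by
  induction ms with
  | nil => intro r a; exact List.nil_sublist _
  | cons m ms ih =>
    intro r a
    exact ((ih _ _).cons_cons m).trans (List.sublist_append_right _ _)

lemma travel_valid (w : List ℕ) (k : ℕ) (ms : List ℕ) :
    ∀ r a, TravelOK w k r a ms → ∀ m ∈ ms, ValidNode w m := by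
  induction ms with
  | nil => intro r a _ m hm; simp at hm
  | cons m ms ih =>
    intro r a h x hx
    rcases List.mem_cons.1 hx with rfl | hx
    · exact h.1
    · exact ih _ _ h.2.2.2.2 x hx

lemma mem_nodesOn (w : List ℕ) (r j : ℕ) :
    j ∈ nodesOn w r ↔ ValidNode w j ∧ NodeOnWire w j r := by
  unfold nodesOn ValidNode
  rw [List.mem_filter, List.mem_map]
  simp only [List.mem_range, decide_eq_true_eq]
  constructor
  · rintro ⟨⟨x, hx, rfl⟩, h⟩
    exact ⟨⟨by omega, by omega⟩, h⟩
  · rintro ⟨⟨h1, h2⟩, h⟩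
    exact ⟨⟨j - 1, by omega, by omega⟩, h⟩

/-- the travel time along wire `r` from node `a`. -/
def key (k r a j : ℕ) : ℕ := if r ≤ k then a - j else j

lemma coeff_head (w : List ℕ) (k r a j : ℕ) (l : List ℕ) (hl : TravelOK w k r a l)
    (hn : (visitTail w r a l).Nodup) (hv : ValidNode w j) (hw : NodeOnWire w j r)
    (hj : if r ≤ k then j < a else a < j)
    (hmin : ∀ h, l.head? = some h → key k r a j ≤ key k r a h) :
    coeff w r l j = if l.head? = some j then sg r (otherWire w j r) else 0 := by
  cases l with
  | nil => simp [coeff_nil]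
  | cons h l =>
    have hk := hmin h rfl
    obtain ⟨-, -, hdir, -, -⟩ := hl
    simp only [List.head?_cons, Option.some.injEq]
    have hsub := (sublist_visitTail w l (otherWire w h r) h).subset
    simp only [visitTail] at hn
    rw [List.nodup_append] at hn
    obtain ⟨-, hn2, hdis⟩ := hn
    rw [List.nodup_cons] at hn2
    rw [coeff_cons]
    by_cases e : h = j
    · subst e
      rw [if_pos rfl, coeff_not_mem w h l _ (fun hm => hn2.1 (hsub hm)), add_zero]
    · rw [if_neg e, if_neg e, coeff_not_mem, add_zero]
      intro hm
      have hseg : j ∈ segList w r a h := by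
        unfold segList
        rw [List.mem_filter, mem_nodesOn]
        refine ⟨⟨hv, hw⟩, ?_⟩
        unfold key at hk
        split_ifs at hdir hj hk <;> simp only [decide_eq_true_eq] <;> omega
      exact hdis j hseg j (List.mem_cons_of_mem _ (hsub hm)) rfl

lemma heads_agree (w : List ℕ) (k : ℕ) {ι : Type*} (s : Finset ι) (c : ι → ℝ)
    (hc : ∀ i ∈ s, 0 < c i) (hsum : ∑ i ∈ s, c i = 1) (ms : List ℕ) (r a : ℕ) (l : ι → List ℕ)
    (hP : TravelOK w k r a ms) (hPn : (visitTail w r a ms).Nodup)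
    (hl : ∀ i ∈ s, TravelOK w k r a (l i)) (hln : ∀ i ∈ s, (visitTail w r a (l i)).Nodup)
    (H : ∀ j, ValidNode w j → ∑ i ∈ s, c i * coeff w r (l i) j = coeff w r ms j)
    (hne : ∃ j, ms.head? = some j ∨ ∃ i ∈ s, (l i).head? = some j) :
    ∃ j, ms.head? = some j ∧ ∀ i ∈ s, (l i).head? = some j := by
  obtain ⟨j, hj, hmin⟩ := (measure (key k r a)).wf.has_min
    {j | ms.head? = some j ∨ ∃ i ∈ s, (l i).head? = some j} hne
  have hmin' : ∀ x, (ms.head? = some x ∨ ∃ i ∈ s, (l i).head? = some x) →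
      key k r a j ≤ key k r a x := fun x hx => not_lt.1 (hmin x hx)
  have hgen : ∀ l, TravelOK w k r a l → l.head? = some j →
      ValidNode w j ∧ NodeOnWire w j r ∧ (if r ≤ k then j < a else a < j) := by
    intro l hl hh
    cases l with
    | nil => simp at hh
    | cons h l =>
      simp only [List.head?_cons, Option.some.injEq] at hh
      subst hh
      exact ⟨hl.1, hl.2.1, hl.2.2.1⟩
  obtain ⟨hv, hw, hd⟩ : ValidNode w j ∧ NodeOnWire w j r ∧ (if r ≤ k then j < a else a < j) := by
    rcases hj with hj | ⟨i, hi, hj⟩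
    · exact hgen _ hP hj
    · exact hgen _ (hl i hi) hj
  have hcP := coeff_head w k r a j ms hP hPn hv hw hd (fun h hh => hmin' h (Or.inl hh))
  have hcl : ∀ i ∈ s, coeff w r (l i) j =
      if (l i).head? = some j then sg r (otherWire w j r) else 0 := fun i hi =>
    coeff_head w k r a j (l i) (hl i hi) (hln i hi) hv hw hd
      (fun h hh => hmin' h (Or.inr ⟨i, hi, hh⟩))
  have hH := H j hv
  rw [hcP, Finset.sum_congr rfl (fun i hi => by rw [hcl i hi])] at hH
  set S := sg r (otherWire w j r) with hS
  have hS0 : S ≠ 0 := sg_ne _ _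
  have hH' : ∑ i ∈ s, c i * (if (l i).head? = some j then (1 : ℝ) else 0) =
      if ms.head? = some j then 1 else 0 := by
    have h1 : (∑ i ∈ s, c i * (if (l i).head? = some j then (1 : ℝ) else 0)) * S =
        (if ms.head? = some j then 1 else 0) * S := by
      rw [Finset.sum_mul]
      convert hH using 1
      · refine Finset.sum_congr rfl (fun i _ => ?_)
        split_ifs <;> ring
      · split_ifs <;> ring
    exact mul_right_cancel₀ hS0 h1
  by_cases hm : ms.head? = some j
  · refine ⟨j, hm, ?_⟩
    rw [if_pos hm] at hH'
    have h0 : ∑ i ∈ s, c i * (1 - if (l i).head? = some j then (1 : ℝ) else 0) = 0 := by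
      simp only [mul_sub, mul_one, Finset.sum_sub_distrib]
      linarith
    rw [Finset.sum_eq_zero_iff_of_nonneg] at h0
    · intro i hi
      by_contra hcon
      have := h0 i hi
      rw [if_neg hcon] at this
      have := hc i hi
      linarith
    · intro i hi
      have := hc i hi
      split_ifs <;> (simp; try linarith)
  · exfalso
    rw [if_neg hm, Finset.sum_eq_zero_iff_of_nonneg] at hH'
    · rcases hj with hj | ⟨i, hi, hj⟩
      · exact hm hj
      · have := hH' i hi
        rw [if_pos hj] at this
        have := hc i hi
        linarith
    · intro i hi
      have := hc i hi
      split_ifs <;> (simp; try linarith)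

lemma paths_agree (w : List ℕ) (k : ℕ) {ι : Type*} (s : Finset ι) (c : ι → ℝ)
    (hc : ∀ i ∈ s, 0 < c i) (hsum : ∑ i ∈ s, c i = 1) (ms : List ℕ) :
    ∀ (r a : ℕ) (l : ι → List ℕ),
    TravelOK w k r a ms → (visitTail w r a ms).Nodup →
    (∀ i ∈ s, TravelOK w k r a (l i)) → (∀ i ∈ s, (visitTail w r a (l i)).Nodup) →
    (∀ j, ValidNode w j → ∑ i ∈ s, c i * coeff w r (l i) j = coeff w r ms j) →
    ∀ i ∈ s, l i = ms := by
  induction ms with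
  | nil =>
    intro r a l hP hPn hl hln H i hi
    by_contra hcon
    cases hli : l i with
    | nil => exact hcon hli
    | cons x y =>
      obtain ⟨j, hj, -⟩ := heads_agree w k s c hc hsum [] r a l hP hPn hl hln H
        ⟨x, Or.inr ⟨i, hi, by rw [hli]; rfl⟩⟩
      simp at hj
  | cons m ms ih =>
    intro r a l hP hPn hl hln H
    obtain ⟨j, hj, hall⟩ := heads_agree w k s c hc hsum (m :: ms) r a l hP hPn hl hln H
        ⟨m, Or.inl rfl⟩
    simp only [List.head?_cons, Option.some.injEq] at hj
    subst hj
    have hcons : ∀ i ∈ s, l i = m :: (l i).tail := by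
      intro i hi
      have := hall i hi
      cases hli : l i with
      | nil => rw [hli] at this; simp at this
      | cons x y => rw [hli] at this; simp at this; simp [this]
    have hnd : ∀ y, (visitTail w r a (m :: y)).Nodup →
        (visitTail w (otherWire w m r) m y).Nodup := by
      intro y hy
      simp only [visitTail] at hy
      exact (List.nodup_cons.1 (List.nodup_append.1 hy).2.1).2
    have := ih (otherWire w m r) m (fun i => (l i).tail) hP.2.2.2.2 (hnd _ hPn)
      (fun i hi => by
        have h := hl i hi
        rw [hcons i hi] at h
        exact h.2.2.2.2)
      (fun i hi => by
        have h := hln i hi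
        rw [hcons i hi] at h
        exact hnd _ h)
      (fun j hj => by
        have h := H j hj
        rw [coeff_cons, Finset.sum_congr rfl (fun i hi => by
          rw [hcons i hi, coeff_cons, mul_add]), Finset.sum_add_distrib, ← Finset.sum_mul, hsum,
          one_mul] at h
        exact add_left_cancel h)
    intro i hi
    rw [hcons i hi, this i hi]

lemma gp_travel {n : ℕ} {w : List ℕ} {k : ℕ} {ms : List ℕ} (h : IsGPPath n w k ms) :
    1 ≤ k ∧ k ≤ n ∧ TravelOK w k k (w.length + 1) ms ∧
      (visitTail w k (w.length + 1) ms).Nodup := by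
  obtain ⟨h1, h2, h3, h4⟩ := h
  cases ms with
  | nil => exact h3.elim
  | cons m ms =>
    obtain ⟨hv, hw, ht, hr⟩ := h3
    have hseg : segList w k (w.length + 1) m = tailList w k m := by
      unfold segList tailList
      apply List.filter_congr
      intro j hj
      rw [mem_nodesOn] at hj
      have := hj.1.2
      have := hv.2
      simp only [decide_eq_decide]
      omega
    refine ⟨h1, h2, ⟨hv, hw, ?_, ?_, hr⟩, ?_⟩
    · rw [if_pos le_rfl]
      have := hv.2
      omega
    · rw [hseg]; exact ht
    · simp only [visitTail, hseg]
      exact h4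

lemma GP_finite (n : ℕ) (w : List ℕ) : (GP n w).Finite := by
  have hfin : ((Set.Icc 1 n) ×ˢ ((List.map (Fin.val : Fin (w.length + 1) → ℕ)) ''
      {l | l.length ≤ w.length + 1})).Finite :=
    (Set.finite_Icc 1 n).prod ((List.finite_length_le _ _).image _)
  refine hfin.subset ?_
  rintro ⟨k, ms⟩ h
  obtain ⟨h1, h2, h3, h4⟩ := gp_travel h
  refine ⟨⟨h1, h2⟩, ?_⟩
  have hv := travel_valid _ _ _ _ _ h3
  have hnd : ms.Nodup := h4.sublist (sublist_visitTail w ms _ _)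
  have hmap : (ms.map (Fin.ofNat (w.length + 1))).map Fin.val = ms := by
    rw [List.map_map]
    conv_rhs => rw [← List.map_id ms]
    apply List.map_congr_left
    intro m hm
    have := (hv m hm).2
    simp [Fin.ofNat, Nat.mod_eq_of_lt (Nat.lt_succ_of_le this)]
  refine ⟨ms.map (Fin.ofNat (w.length + 1)), ?_, hmap⟩
  have : (ms.map (Fin.ofNat (w.length + 1))).Nodup := by
    apply List.Nodup.of_map Fin.val
    rw [hmap]; exact hnd
  simpa using this.length_le_card

/-- the path vector is not in the convex hull of the other path vectors with the same `k`. -/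
lemma not_mem_hull {n : ℕ} {w : List ℕ} (hlen : w.length = Dim n) {k : ℕ} {ms : List ℕ}
    (hP : (k, ms) ∈ GP n w) :
    normalVec n w (k, ms) ∉
      convexHull ℝ (normalVec n w '' {q | q ∈ GP n w ∧ q.1 = k ∧ q ≠ (k, ms)}) := by
  intro hmem
  obtain ⟨ι, _, c, z, hc0, hc1, hz, hsum⟩ := mem_convexHull_iff_exists_fintype.1 hmem
  choose q hq hqz using hz
  set s : Finset ι := Finset.univ.filter (fun i => c i ≠ 0) with hs
  have hpos : ∀ i ∈ s, 0 < c i := by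
    intro i hi
    exact lt_of_le_of_ne (hc0 i) (Finset.mem_filter.1 hi).2.symm
  have hs1 : ∑ i ∈ s, c i = 1 := by rw [hs, Finset.sum_filter_ne_zero, hc1]
  have hP' := gp_travel hP
  have hq' : ∀ i, TravelOK w k k (w.length + 1) (q i).2 ∧
      (visitTail w k (w.length + 1) (q i).2).Nodup := by
    intro i
    obtain ⟨h1, h2, -⟩ := hq i
    have := (gp_travel h1).2.2
    rw [h2] at this
    exact this
  have hag := paths_agree w k s c hpos hs1 ms k (w.length + 1) (fun i => (q i).2) hP'.2.2.1
    hP'.2.2.2 (fun i _ => (hq' i).1) (fun i _ => (hq' i).2) (by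
      intro j hj
      have hj' : j - 1 < Dim n := by
        have := hj.1
        have := hj.2
        omega
      have hj1 : j - 1 + 1 = j := Nat.sub_add_cancel hj.1
      have h := congrFun hsum ⟨j - 1, hj'⟩
      rw [Finset.sum_apply] at h
      simp only [Pi.smul_apply, smul_eq_mul, ← hqz, normalVec, hj1] at h
      rw [← h, hs, Finset.sum_filter]
      refine Finset.sum_congr rfl (fun i _ => ?_)
      rw [(hq i).2.1]
      by_cases h0 : c i = 0 <;> simp [h0])
  have hsne : s.Nonempty := by
    by_contra hcon
    rw [Finset.not_nonempty_iff_eq_empty] at hcon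
    rw [hcon] at hs1
    simp at hs1
  obtain ⟨i, hi⟩ := hsne
  exact (hq i).2.2 (Prod.ext (hq i).2.1 (hag i hi))

/-! ### Wires and the apex of the `λ`-cone -/

lemma wordProd_take_succ (w : List ℕ) (k : ℕ) (hk : k < w.length) :
    wordProd (w.take (k + 1)) = wordProd (w.take k) * sTrans (letterAt w (k + 1)) := by
  have h : w.take (k + 1) = w.take k ++ [letterAt w (k + 1)] := by
    rw [List.take_succ_eq_append_getElem hk]
    simp [letterAt, List.getD_eq_getElem?_getD, hk]
  rw [h]
  simp [wordProd]

lemma longestPerm_apply (n x : ℕ) :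
    longestPerm n x = if 1 ≤ x ∧ x ≤ n + 1 then n + 2 - x else x := rfl

lemma exists_crossing {n : ℕ} {w : List ℕ} (hw : IsReduced n w) (a b : ℕ) (ha : 1 ≤ a)
    (hab : a < b) (hb : b ≤ n + 1) :
    ∃ k < w.length, wireX w (k + 1) = a ∧ wireY w (k + 1) = b := by
  set pos : ℕ → ℕ → ℕ := fun k x => (wordProd (w.take k)).symm x with hpos
  by_contra hcon
  have step : ∀ k, k ≤ w.length → pos k a < pos k b := by
    intro k
    induction k with
    | zero => intro _; exact hab
    | succ k ih =>
      intro hk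
      have h1 := ih (by omega)
      have hs : ∀ x, pos (k + 1) x = sTrans (letterAt w (k + 1)) (pos k x) := by
        intro x
        simp only [hpos]
        rw [wordProd_take_succ w k (by omega)]
        rw [Equiv.symm_apply_eq]
        simp [sTrans]
      rw [hs, hs]
      by_contra hlt
      apply hcon
      refine ⟨k, by omega, ?_⟩
      have hh : pos k a = letterAt w (k + 1) ∧ pos k b = letterAt w (k + 1) + 1 := by
        simp only [sTrans, Equiv.swap_apply_def] at hlt
        split_ifs at hlt <;> omega
      unfold wireX wireY stateAbove
      simp only [Nat.add_sub_cancel]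
      rw [← hh.2, ← hh.1]
      simp [hpos]
  have hN := step w.length le_rfl
  simp only [hpos, List.take_length, hw.2.2] at hN
  have hl : ∀ x, 1 ≤ x → x ≤ n + 1 → (longestPerm n).symm x = n + 2 - x := by
    intro x h1 h2
    rw [Equiv.symm_apply_eq]
    simp only [longestPerm_apply]
    split_ifs <;> omega
  rw [hl a ha (by omega), hl b (by omega) hb] at hN
  omega

lemma wire_lt {n : ℕ} {w : List ℕ} (hw : IsReduced n w) (k : ℕ) (hk : k < w.length) :
    wireX w (k + 1) < wireY w (k + 1) := by
  have hex : ∀ p : (y : Fin (n + 1)) × Fin y.val, ∃ k : Fin w.length,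
      wireX w (k + 1) = p.2.val + 1 ∧ wireY w (k + 1) = p.1.val + 1 := by
    intro p
    obtain ⟨k, hk, h⟩ := exists_crossing hw (p.2.val + 1) (p.1.val + 1) (by omega)
      (by have := p.2.2; omega) (by have := p.1.2; omega)
    exact ⟨⟨k, hk⟩, h⟩
  choose φ hφ using hex
  have hinj : Function.Injective φ := by
    intro p q hpq
    have h1 := hφ p
    have h2 := hφ q
    rw [hpq] at h1
    have e1 : p.1 = q.1 := by
      apply Fin.ext
      omega
    have e2 : p.2.val = q.2.val := by omega
    obtain ⟨y, x⟩ := p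
    obtain ⟨y', x'⟩ := q
    simp only at e1 e2
    subst e1
    rw [Fin.ext e2]
  have hcard : Fintype.card ((y : Fin (n + 1)) × Fin y.val) = Fintype.card (Fin w.length) := by
    rw [Fintype.card_sigma]
    simp only [Fintype.card_fin]
    rw [Fin.sum_univ_eq_sum_range (fun i => i) (n + 1), Finset.sum_range_id, hw.1]
    simp [Nat.mul_comm]
  obtain ⟨p, hp⟩ := ((Fintype.bijective_iff_injective_and_card φ).2 ⟨hinj, hcard⟩).2 ⟨k, hk⟩
  have h := hφ p
  rw [hp] at h
  have := p.2.2
  simp only at h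
  omega

/-- the point with coordinates `Λ_X - Λ_Y`. -/
def alpha (n : ℕ) (w : List ℕ) (L : ℕ → ℝ) : Fin (Dim n) → ℝ :=
  fun j => L (wireX w (j + 1)) - L (wireY w (j + 1))

lemma travel_sum {n : ℕ} {w : List ℕ} (hw : IsReduced n w) (L : ℕ → ℝ) (k : ℕ) (ms : List ℕ) :
    ∀ r a, TravelOK w k r a ms →
      ∑ j : Fin (Dim n), coeff w r ms ((j : ℕ) + 1) * alpha n w L j = L r - L (k + 1) := by
  induction ms with
  | nil =>
    intro r a h
    simp [coeff_nil, h.1]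
  | cons m ms ih =>
    intro r a h
    obtain ⟨hv, hon, -, -, hr⟩ := h
    have hm : m - 1 < w.length := by
      have := hv.1
      have := hv.2
      omega
    have hm1 : m - 1 + 1 = m := Nat.sub_add_cancel hv.1
    have hm' : m - 1 < Dim n := by
      have := hw.1
      unfold Dim
      omega
    have hlt := wire_lt hw (m - 1) hm
    rw [hm1] at hlt
    simp only [coeff_cons, add_mul, Finset.sum_add_distrib]
    rw [ih _ _ hr, Finset.sum_eq_single (⟨m - 1, hm'⟩ : Fin (Dim n))]
    · simp only [hm1, if_true, alpha]
      have : sg r (otherWire w m r) * (L (wireX w m) - L (wireY w m)) =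
          L r - L (otherWire w m r) := by
        unfold otherWire sg
        rcases hon with rfl | rfl
        · rw [if_pos rfl, if_pos hlt]; ring
        · rw [if_neg hlt.ne, if_neg (not_lt.2 hlt.le)]; ring
      rw [this]; ring
    · intro b _ hb
      rw [if_neg, zero_mul]
      intro e
      apply hb
      apply Fin.ext
      simp only
      omega
    · intro h; exact absurd (Finset.mem_univ _) h

lemma string_alpha {n : ℕ} {w : List ℕ} (hw : IsReduced n w) (L : ℕ → ℝ) (p : ℕ × List ℕ)
    (hp : p ∈ GP n w) : stringIneq n w p (alpha n w L) = L p.1 - L (p.1 + 1) :=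
  travel_sum hw L p.1 p.2 _ _ (gp_travel hp).2.2.1

/-- linear part of the slack of a `λ`-inequality. -/
def lamLin (n : ℕ) (w : List ℕ) (j : Fin (Dim n)) (t : Fin (Dim n) → ℝ) : ℝ :=
  (∑ k : Fin (Dim n),
      (if (j : ℕ) < (k : ℕ) then lamCoeff w ((j : ℕ) + 1) ((k : ℕ) + 1) else 0) * t k) - t j

/-- the difference of heights. -/
def hD (w : List ℕ) (L : ℕ → ℝ) (k c : ℕ) : ℝ :=
  L (wordProd (w.take k) c) - L (wordProd (w.take k) (c + 1))

lemma hD_succ (w : List ℕ) (L : ℕ → ℝ) (k j : ℕ) (hk : k < w.length) :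
    hD w L (k + 1) (letterAt w j) = hD w L k (letterAt w j) +
      lamCoeff w j (k + 1) * (L (wireX w (k + 1)) - L (wireY w (k + 1))) := by
  unfold hD lamCoeff wireX wireY stateAbove
  rw [wordProd_take_succ w k hk]
  simp only [Nat.add_sub_cancel, Equiv.Perm.mul_apply, sTrans, Equiv.swap_apply_def]
  generalize letterAt w (k + 1) = d
  generalize letterAt w j = c
  by_cases h1 : d = c
  · subst h1
    simp
    ring
  · by_cases h2 : d = c + 1
    · subst h2
      have e1 : c ≠ c + 1 + 1 := by omega
      simp [e1]
    · by_cases h3 : d + 1 = c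
      · subst h3
        have e1 : d + 1 + 1 ≠ d := by omega
        simp [e1]
      · have e1 : c ≠ d := fun e => h1 e.symm
        have e2 : c ≠ d + 1 := fun e => h3 e.symm
        have e3 : c + 1 ≠ d := fun e => h2 e.symm
        have e4 : c + 1 ≠ d + 1 := by omega
        simp [h1, h2, h3, e1, e2, e3]

lemma lamLin_alpha {n : ℕ} {w : List ℕ} (hw : IsReduced n w) (L : ℕ → ℝ) (j : Fin (Dim n)) :
    lamLin n w j (alpha n w L) =
      L (n + 2 - letterAt w (j + 1)) - L (n + 1 - letterAt w (j + 1)) := by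
  have hj : (j : ℕ) < w.length := by rw [hw.1]; exact j.2
  set c := letterAt w (j + 1) with hc
  have hcmem : c ∈ w := by
    have : c = w[(j : ℕ)] := by simp [hc, letterAt, List.getD_eq_getElem?_getD, hj]
    rw [this]; exact List.getElem_mem _
  have hcr := hw.2.1 c hcmem
  have hsum : ∀ M, M ≤ w.length → (j : ℕ) + 1 ≤ M →
      ∑ k ∈ Finset.range M, (if (j : ℕ) < k then lamCoeff w ((j : ℕ) + 1) (k + 1) else 0) *
        (L (wireX w (k + 1)) - L (wireY w (k + 1))) = hD w L M c - hD w L (j + 1) c := by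
    intro M hM hjM
    induction M, hjM using Nat.le_induction with
    | base =>
      rw [sub_self]
      apply Finset.sum_eq_zero
      intro k hk
      rw [Finset.mem_range] at hk
      rw [if_neg (by omega), zero_mul]
    | succ M hjM ih =>
      rw [Finset.sum_range_succ, ih (by omega), if_pos (by omega), hc,
        hD_succ w L M (j + 1) (by omega)]
      ring
  have h1 := hsum w.length le_rfl (by omega)
  unfold lamLin
  have h2 : ∑ k : Fin (Dim n), (if (j : ℕ) < (k : ℕ) then
      lamCoeff w ((j : ℕ) + 1) ((k : ℕ) + 1) else 0) * alpha n w L k =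
      hD w L w.length c - hD w L (j + 1) c := by
    rw [← h1, hw.1]
    exact Fin.sum_univ_eq_sum_range (fun k => (if (j : ℕ) < k then
      lamCoeff w ((j : ℕ) + 1) (k + 1) else 0) *
        (L (wireX w (k + 1)) - L (wireY w (k + 1)))) (Dim n)
  rw [h2]
  have h3 : hD w L (j + 1) c = - alpha n w L j := by
    unfold hD alpha wireX wireY stateAbove
    rw [wordProd_take_succ w j hj, ← hc]
    simp [sTrans]
  have h4 : hD w L w.length c = L (n + 2 - c) - L (n + 1 - c) := by
    unfold hD
    rw [List.take_length, hw.2.2]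
    simp only [longestPerm_apply]
    rw [if_pos (by omega), if_pos (by omega)]
    congr 2
    omega
  rw [h3, h4]; ring

/-- heights from differences. -/
def LL (mu : ℕ → ℝ) (x : ℕ) : ℝ := - ∑ y ∈ Finset.range x, mu y

lemma LL_sub (mu : ℕ → ℝ) (x : ℕ) : LL mu x - LL mu (x + 1) = mu x := by
  unfold LL; rw [Finset.sum_range_succ]; ring

lemma letter_range {n : ℕ} {w : List ℕ} (hw : IsReduced n w) (j : Fin (Dim n)) :
    1 ≤ letterAt w (j + 1) ∧ letterAt w (j + 1) ≤ n := by
  have hj : (j : ℕ) < w.length := by rw [hw.1]; exact j.2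
  apply hw.2.1
  have : letterAt w (j + 1) = w[(j : ℕ)] := by simp [letterAt, List.getD_eq_getElem?_getD, hj]
  rw [this]; exact List.getElem_mem _

lemma string_lin (n : ℕ) (w : List ℕ) (p : ℕ × List ℕ) (x y : Fin (Dim n) → ℝ) (s t : ℝ) :
    stringIneq n w p (s • x + t • y) = s * stringIneq n w p x + t * stringIneq n w p y := by
  unfold stringIneq
  rw [Finset.mul_sum, Finset.mul_sum, ← Finset.sum_add_distrib]
  refine Finset.sum_congr rfl (fun j _ => ?_)
  simp only [Pi.add_apply, Pi.smul_apply, smul_eq_mul]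
  ring

lemma lamLin_lin (n : ℕ) (w : List ℕ) (j : Fin (Dim n)) (x y : Fin (Dim n) → ℝ) (s t : ℝ) :
    lamLin n w j (s • x + t • y) = s * lamLin n w j x + t * lamLin n w j y := by
  unfold lamLin
  rw [mul_sub, mul_sub, Finset.mul_sum, Finset.mul_sum, sub_add_sub_comm,
    ← Finset.sum_add_distrib]
  congr 1
  refine Finset.sum_congr rfl (fun j _ => ?_)
  simp only [Pi.add_apply, Pi.smul_apply, smul_eq_mul]
  ring

lemma lamLin_surj (n : ℕ) (w : List ℕ) (σ : Fin (Dim n) → ℝ) :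
    ∃ u, ∀ j, lamLin n w j u = σ j := by
  let F : (Fin (Dim n) → ℝ) →ₗ[ℝ] (Fin (Dim n) → ℝ) :=
    { toFun := fun u j => lamLin n w j u
      map_add' := by
        intro x y
        ext j
        have := lamLin_lin n w j x y 1 1
        simpa using this
      map_smul' := by
        intro s x
        ext j
        have := lamLin_lin n w j x 0 s 0
        simpa using this }
  have hinj : Function.Injective F := by
    rw [injective_iff_map_eq_zero]
    intro u hu
    by_contra hne
    have hne' : (Finset.univ.filter (fun j => u j ≠ 0)).Nonempty := by
      by_contra h
      apply hne
      ext j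
      by_contra hj
      exact h ⟨j, by simpa using hj⟩
    obtain ⟨j, hj, hmax⟩ := Finset.exists_max_image _ (fun j : Fin (Dim n) => j) hne'
    have h0 : lamLin n w j u = 0 := congrFun hu j
    unfold lamLin at h0
    rw [Finset.sum_eq_zero] at h0
    · have := (Finset.mem_filter.1 hj).2
      apply this
      linarith
    · intro k _
      by_cases hk : (j : ℕ) < k
      · have : u k = 0 := by
          by_contra hk0
          have := hmax k (by simpa using hk0)
          have : (k : ℕ) ≤ j := this
          omega
        rw [this, mul_zero]
      · rw [if_neg hk, zero_mul]
  obtain ⟨u, hu⟩ := (LinearMap.injective_iff_surjective.1 hinj) σ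
  exact ⟨u, fun j => congrFun hu j⟩

/-- all defining affine functions of the string polytope. -/
def gAll (n : ℕ) (w : List ℕ) (lam : ℕ → ℤ) :
    (GP n w) ⊕ Fin (Dim n) → (Fin (Dim n) → ℝ) → ℝ
  | Sum.inl p, t => stringIneq n w p.1 t
  | Sum.inr j, t => (lam (letterAt w ((j : ℕ) + 1)) : ℝ) + lamLin n w j t

lemma poly_eq (n : ℕ) (w : List ℕ) (lam : ℕ → ℤ) :
    stringPolytope n w lam = Poly (gAll n w lam) := by
  ext t
  constructor
  · rintro ⟨h1, h2⟩ (p | j)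
    · exact h1 p.1 p.2
    · have := h2 j
      unfold LamIneq at this
      simp only [gAll, lamLin]
      linarith
  · intro h
    refine ⟨fun p hp => h (Sum.inl ⟨p, hp⟩), fun j => ?_⟩
    have := h (Sum.inr j)
    simp only [gAll, lamLin] at this
    unfold LamIneq
    linarith

lemma gAll_aff (n : ℕ) (w : List ℕ) (lam : ℕ → ℤ) (a : (GP n w) ⊕ Fin (Dim n)) :
    IsAff (gAll n w lam a) := by
  intro x y s t hst
  rcases a with p | j
  · exact string_lin n w p.1 x y s t
  · simp only [gAll]
    rw [lamLin_lin, mul_add, mul_add]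
    have : (lam (letterAt w ((j : ℕ) + 1)) : ℝ) = s * (lam (letterAt w ((j : ℕ) + 1)) : ℝ) +
        t * (lam (letterAt w ((j : ℕ) + 1)) : ℝ) := by rw [← add_mul, hst, one_mul]
    linarith

lemma near_apex {n : ℕ} {w : List ℕ} (hw : IsReduced n w) {lam : ℕ → ℤ}
    (hlam : RegularDominant n lam) (σ : Fin (Dim n) → ℝ) :
    ∃ x, (∀ p : GP n w, 0 < stringIneq n w p.1 x) ∧ ∃ ε : ℝ, 0 < ε ∧ ∀ j : Fin (Dim n),
      (lam (letterAt w ((j : ℕ) + 1)) : ℝ) + lamLin n w j x = ε * σ j := by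
  have : Finite (GP n w) := (GP_finite n w).to_subtype
  obtain ⟨u, hu⟩ := lamLin_surj n w σ
  set mu : ℕ → ℝ := fun y => (lam (n + 1 - y) : ℝ) with hmu
  set A := alpha n w (LL mu) with hA
  have hsA : ∀ p : GP n w, 0 < stringIneq n w p.1 A := by
    intro p
    rw [hA, string_alpha hw _ _ p.2, LL_sub]
    have h := gp_travel p.2
    simp only [hmu]
    exact_mod_cast hlam _ (by omega) (by omega)
  obtain ⟨ε, he, hε⟩ := exists_small (fun p : GP n w => stringIneq n w p.1 A)
    (fun p => - stringIneq n w p.1 u) hsA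
  refine ⟨(1 : ℝ) • A + ε • u, ?_, ε, he, ?_⟩
  · intro p
    rw [string_lin]
    have := hε p
    linarith
  · intro j
    rw [lamLin_lin, hu, hA, lamLin_alpha hw]
    have hr := letter_range hw j
    have e : n + 2 - letterAt w (j + 1) = (n + 1 - letterAt w (j + 1)) + 1 := by omega
    have h := LL_sub mu (n + 1 - letterAt w (j + 1))
    have e2 : n + 1 - (n + 1 - letterAt w (j + 1)) = letterAt w (j + 1) := by omega
    have h' : mu (n + 1 - letterAt w (j + 1)) = (lam (letterAt w (j + 1)) : ℝ) := by
      simp only [hmu, e2]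
    rw [e]
    linarith

lemma string_facet_point {n : ℕ} {w : List ℕ} (hw : IsReduced n w) {lam : ℕ → ℤ}
    (hlam : RegularDominant n lam) (P : GP n w) :
    ∃ x, stringIneq n w P.1 x = 0 ∧ (∀ q : GP n w, q ≠ P → 0 < stringIneq n w q.1 x) ∧
      ∀ j : Fin (Dim n), 0 < (lam (letterAt w ((j : ℕ) + 1)) : ℝ) + lamLin n w j x := by
  obtain ⟨⟨k, ms⟩, hP⟩ := P
  have hfin := GP_finite n w
  have hcl : IsClosed (convexHull ℝ
      (normalVec n w '' {q | q ∈ GP n w ∧ q.1 = k ∧ q ≠ (k, ms)})) :=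
    Set.Finite.isClosed_convexHull (𝕜 := ℝ) ((hfin.subset (fun q hq => hq.1)).image _)
  obtain ⟨f, u, hfu, hf⟩ := geometric_hahn_banach_point_closed (convex_convexHull ℝ _) hcl
    (not_mem_hull hw.1 hP)
  set τ : Fin (Dim n) → ℝ := fun j => f (Pi.single j 1) with hτ
  have hfτ : ∀ q, stringIneq n w q τ = f (normalVec n w q) := by
    intro q
    have h1 : normalVec n w q = ∑ j, normalVec n w q j • (Pi.single j (1 : ℝ) : Fin (Dim n) → ℝ) := by
      ext i
      simp [Finset.sum_apply, Pi.single_apply]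
    conv_rhs => rw [h1, map_sum]
    simp only [map_smul, smul_eq_mul]
    rfl
  obtain ⟨C, hC⟩ := (hfin.image (fun q => - f (normalVec n w q))).bddAbove
  have hC' : ∀ q ∈ GP n w, - f (normalVec n w q) ≤ C := fun q hq => hC ⟨q, hq, rfl⟩
  set mu : ℕ → ℝ := fun y => if y = k then - f (normalVec n w (k, ms)) else C + 1 with hmu
  set x := (1 : ℝ) • τ + (1 : ℝ) • alpha n w (LL mu) with hx
  have hsx : ∀ q ∈ GP n w, stringIneq n w q x = f (normalVec n w q) + mu q.1 := by
    intro q hq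
    rw [hx, string_lin, string_alpha hw _ _ hq, LL_sub, hfτ]
    ring
  have hx0 : stringIneq n w (k, ms) x = 0 := by
    rw [hsx _ hP]; simp [hmu]
  have hxq : ∀ q ∈ GP n w, q ≠ (k, ms) → 0 < stringIneq n w q x := by
    intro q hq hne
    rw [hsx _ hq]
    by_cases hk : q.1 = k
    · have := hf _ (subset_convexHull ℝ _ ⟨q, ⟨hq, hk, hne⟩, rfl⟩)
      simp only [hmu, hk, if_true]
      linarith
    · have := hC' q hq
      simp only [hmu, if_neg hk]
      linarith
  obtain ⟨ε, he, hε⟩ := exists_small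
    (fun j : Fin (Dim n) => (lam (letterAt w ((j : ℕ) + 1)) : ℝ))
    (fun j => - lamLin n w j x) (by
      intro j
      have hr := letter_range hw j
      exact_mod_cast hlam _ hr.1 hr.2)
  refine ⟨ε • x + (0 : ℝ) • x, ?_, ?_, ?_⟩
  · rw [string_lin, hx0]; simp
  · intro q hne
    rw [string_lin, zero_mul, add_zero]
    exact mul_pos he (hxq q.1 q.2 (fun e => hne (Subtype.ext e)))
  · intro j
    rw [lamLin_lin]
    have := hε j
    linarith

lemma numFacets_string {n : ℕ} (hn : 1 ≤ n) {w : List ℕ} (hw : IsReduced n w) {lam : ℕ → ℤ}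
    (hlam : RegularDominant n lam) :
    numFacets (stringPolytope n w lam) = numGP n w + Dim n := by
  have : Finite (GP n w) := (GP_finite n w).to_subtype
  have hN : 0 < Dim n := by
    have : 2 ≤ n * (n + 1) := by nlinarith
    unfold Dim
    omega
  have : Nonempty (Fin (Dim n)) := ⟨⟨0, hN⟩⟩
  rw [poly_eq, numFacets_poly (gAll n w lam) (gAll_aff n w lam)]
  · rw [Nat.card_sum, Nat.card_fin]
    rfl
  · obtain ⟨x, h1, ε, he, h2⟩ := near_apex hw hlam (fun _ => 1)
    refine ⟨x, ?_⟩
    rintro (p | j)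
    · exact h1 p
    · simp only [gAll]
      rw [h2]
      linarith
  · rintro (p | j)
    · obtain ⟨x, h0, h1, h2⟩ := string_facet_point hw hlam p
      refine ⟨x, h0, ?_⟩
      rintro (q | j) hne
      · exact h1 q (fun e => hne (by rw [e]))
      · exact h2 j
    · obtain ⟨x, h1, ε, he, h2⟩ := near_apex hw hlam (fun i => if i = j then 0 else 1)
      refine ⟨x, ?_, ?_⟩
      · simp only [gAll]
        rw [h2]
        simp
      · rintro (q | i) hne
        · exact h1 q
        · simp only [gAll]
          rw [h2, if_neg (fun e => hne (by rw [e]))]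
          linarith

/-- If `|GP(i)| ≠ |GP(i')|` then for every regular dominant integral weight `λ` the string
polytopes `Δ_i(λ)` and `Δ_{i'}(λ)` have different numbers of facets; in particular
they are not combinatorially equivalent. -/
theorem statement7 (n : ℕ) (hn : 1 ≤ n) (i i' : List ℕ) (hi : IsReduced n i)
    (hi' : IsReduced n i') (hGP : numGP n i ≠ numGP n i')
    (lam : ℕ → ℤ) (hlam : RegularDominant n lam) :
    numFacets (stringPolytope n i lam) ≠ numFacets (stringPolytope n i' lam) ∧
    ¬ CombEquiv (stringPolytope n i lam) (stringPolytope n i' lam) := by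
  have h1 := numFacets_string hn hi hlam
  have h2 := numFacets_string hn hi' hlam
  have hne : numFacets (stringPolytope n i lam) ≠ numFacets (stringPolytope n i' lam) := by
    omega
  refine ⟨hne, fun hcomb => hne (combEquiv_numFacets ?_ ?_ hcomb)⟩
  · rw [poly_eq]; exact poly_convex _ (gAll_aff n i lam)
  · rw [poly_eq]; exact poly_convex _ (gAll_aff n i' lam)

end StringPolytope
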